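/- Let p be a prime and k ≥ 1 an integer, and let M be a ℤ/p^kℤ-submodule of E_{10}/p^kE_{10} that contains a submodule isomorphic as a ℤ/p^kℤ-module to (ℤ/p^kℤ)^8. Then for every unit a of ℤ/p^kℤ there exist x, y ∈ E_{10} whose images in E_{10}/p^kE_{10} both lie in M and such that (1/2)⟨x,x⟩ ≡ a (mod p^k) and ⟨x,y⟩ ≡ 1 (mod p^k). (Here (1/2)⟨x,x⟩ is an integer, since ⟨x,x⟩ is even for every x ∈ E_{10}.) -/

import Mathlib

/-- The standard bilinear form on `ℤ^{1,n}`: `⟨x,y⟩ = x₀y₀ - ∑_{i=1}^n xᵢyᵢ`. -/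
def B {n : ℕ} (x y : Fin (n + 1) → ℤ) : ℤ :=
  x 0 * y 0 - ∑ i : Fin n, x i.succ * y i.succ

/-- The vector `k_n = -3e₀ + (e₁ + ⋯ + e_n)`. -/
def kv (n : ℕ) : Fin (n + 1) → ℤ := fun j => if j = 0 then -3 else 1

/-- The lattice `E_n = k_n^⊥` as a submodule of `ℤ^{1,n}`. -/
def En (n : ℕ) : Submodule ℤ (Fin (n + 1) → ℤ) where
  carrier := {x | B x (kv n) = 0}
  zero_mem' := by simp [B]
  add_mem' := by
    intro a b ha hb
    simp only [Set.mem_setOf_eq, B, Pi.add_apply, add_mul] at ha hb ⊢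
    rw [Finset.sum_add_distrib]
    linarith
  smul_mem' := by
    intro c x hx
    simp only [Set.mem_setOf_eq, B, Pi.smul_apply, smul_eq_mul, mul_assoc] at hx ⊢
    rw [← Finset.mul_sum, ← mul_sub, hx, mul_zero]

/-- The submodule `m·E₁₀` of `E₁₀`. -/
def mE (m : ℕ) : Submodule ℤ (En 10) :=
  LinearMap.range ((m : ℤ) • (LinearMap.id : En 10 →ₗ[ℤ] En 10))

/-!
Let `q x = ⟨x,x⟩ / 2`. Suppose the lift `N` of `M` to `E₁₀` contains vectors `u` and `w` with
`p ∣ q u` and `p ∤ ⟨u,w⟩`. Then `t ↦ q (w + t u) = q w + t ⟨u,w⟩ + t² q u` is injective on `ℤ/p^k`,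
since its difference quotient `⟨u,w⟩ + (t + t') q u` is a unit; hence it takes every value, and
`⟨w + t u, u⟩ = ⟨u,w⟩ + 2 t q u` is a unit as well.

To find `u` and `w`, reduce modulo `p`. As `⟨k₁₀,k₁₀⟩ = -1`, the lattice `ℤ^{1,10}` is the orthogonal
sum of `E₁₀` and `ℤ k₁₀`, so `E₁₀` is unimodular and the reduced form is nondegenerate. The image
`W` of `N` has dimension at least `8`, so `W ∩ W^⊥` has codimension at least `3` in `W`; by
Chevalley's theorem a complement of it contains a nonzero vector `u` with `q u = 0`. Since
`u ∉ W^⊥`, some `w ∈ W` satisfies `⟨u,w⟩ ≠ 0`.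
-/

open Module QuadraticMap TensorProduct

/-! ### Isotropic vectors over finite fields -/

theorem exists_mvPolynomial_eval_eq_quadraticForm {R M ι : Type*} [CommRing R] [AddCommGroup M]
    [Module R M] [Fintype ι] (Q : QuadraticForm R M) (v : ι → M) :
    ∃ P : MvPolynomial ι R, P.totalDegree ≤ 2 ∧ ∀ s, P.eval s = Q (∑ i, s i • v i) := by
  classical
  obtain ⟨A, hA⟩ := LinearMap.BilinMap.toQuadraticMap_surjective
    (Q.comp (Fintype.linearCombination R v))
  let A' := LinearMap.toMatrix₂' R A
  have hA' : Matrix.toLinearMap₂' R A' = A := Matrix.toLinearMap₂'_toMatrix' A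
  let P : MvPolynomial ι R := ∑ i, ∑ j, .C (A' i j) * (.X i * .X j)
  have hP : P.IsHomogeneous 2 := .sum _ _ _ fun i _ => .sum _ _ _ fun j _ =>
    (MvPolynomial.isHomogeneous_C ι (A' i j)).mul
      ((MvPolynomial.isHomogeneous_X R i).mul (MvPolynomial.isHomogeneous_X R j))
  refine ⟨P, hP.totalDegree_le, fun s => ?_⟩
  calc P.eval s = ∑ i, ∑ j, s i • s j • A' i j := by
        simp only [P, map_sum, map_mul, MvPolynomial.eval_C, MvPolynomial.eval_X, smul_eq_mul,
          mul_assoc, mul_comm]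
    _ = A s s := by rw [← hA', Matrix.toLinearMap₂'_apply]
    _ = Q (∑ i, s i • v i) := by
        rw [← LinearMap.BilinMap.toQuadraticMap_apply, hA, comp_apply,
          Fintype.linearCombination_apply]

theorem exists_ne_zero_quadraticForm_eq_zero {F V : Type*} [Field F] [Finite F] [AddCommGroup V]
    [Module F V] (Q : QuadraticForm F V) (hV : 2 < finrank F V) : ∃ v ≠ 0, Q v = 0 := by
  classical
  have := Fintype.ofFinite F
  have : FiniteDimensional F V := FiniteDimensional.of_finrank_pos (by lia)
  let b := finBasis F V
  obtain ⟨P, hdeg, heval⟩ := exists_mvPolynomial_eval_eq_quadraticForm Q b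
  obtain ⟨p, _⟩ := CharP.exists F
  have hdvd : p ∣ Fintype.card {s // P.eval s = 0} :=
    char_dvd_card_solutions p (hdeg.trans_lt (by rwa [Fintype.card_fin]))
  have hzero : P.eval 0 = 0 := by
    rw [heval]
    simp
  have hcard : 1 < Fintype.card {s // P.eval s = 0} :=
    (CharP.char_is_prime F p).one_lt.trans_le
      (Nat.le_of_dvd (Fintype.card_pos_iff.2 ⟨⟨0, hzero⟩⟩) hdvd)
  obtain ⟨⟨s, hs⟩, hne⟩ := Fintype.exists_ne_of_one_lt_card hcard ⟨0, hzero⟩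
  refine ⟨∑ i, s i • b i, fun h => hne ?_, by rw [← heval, hs]⟩
  exact Subtype.ext (funext (Fintype.linearIndependent_iff.1 b.linearIndependent s h))

theorem exists_notMem_quadraticForm_eq_zero {F V : Type*} [Field F] [Finite F] [AddCommGroup V]
    [Module F V] (Q : QuadraticForm F V) (U : Submodule F V)
    (hU : finrank F U + 2 < finrank F V) : ∃ v ∉ U, Q v = 0 := by
  have : FiniteDimensional F V := FiniteDimensional.of_finrank_pos (by lia)
  obtain ⟨C, hUC⟩ := U.exists_isCompl
  have hC : 2 < finrank F C := by
    have := Submodule.finrank_add_eq_of_isCompl hUC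
    lia
  obtain ⟨v, hv, hQv⟩ := exists_ne_zero_quadraticForm_eq_zero (Q.restrict C) hC
  exact ⟨v, fun hvU => hv (Subtype.ext (Submodule.disjoint_def.1 hUC.disjoint v hvU v.2)), hQv⟩

theorem exists_mem_isotropic_polar_ne_zero {F V : Type*} [Field F] [Finite F] [AddCommGroup V]
    [Module F V] [FiniteDimensional F V] {Q : QuadraticForm F V}
    (hQ : Q.polarBilin.Nondegenerate) (W : Submodule F V)
    (hW : finrank F V + 2 < 2 * finrank F W) :
    ∃ u ∈ W, ∃ w ∈ W, Q u = 0 ∧ polar Q u w ≠ 0 := by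
  let U := (LinearMap.BilinForm.orthogonal Q.polarBilin W).comap W.subtype
  have hU : finrank F U + 2 < finrank F W := by
    have hle : finrank F U ≤ finrank F (LinearMap.BilinForm.orthogonal Q.polarBilin W) := by
      rw [← Submodule.finrank_map_subtype_eq]
      exact Submodule.finrank_mono (Submodule.map_comap_le _ _)
    rw [LinearMap.BilinForm.finrank_orthogonal hQ] at hle
    have := W.finrank_le
    lia
  obtain ⟨u, hu, hQu⟩ := exists_notMem_quadraticForm_eq_zero (Q.restrict W) U hU
  obtain ⟨w, hw, hwu⟩ : ∃ w ∈ W, polar Q w u ≠ 0 := by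
    simpa [U, LinearMap.BilinForm.mem_orthogonal_iff] using hu
  exact ⟨u, u.2, w, hw, hQu, by rwa [polar_comm]⟩

/-! ### Reduction of quadratic forms -/

section BaseChange

variable {R L : Type*} [CommRing R] [AddCommGroup L] [Module R L]

theorem exists_quadraticForm_one_tmul [Module.Free R L] (S : Type*) [CommRing S] [Algebra R S]
    (Q : QuadraticForm R L) :
    ∃ Q' : QuadraticForm S (S ⊗[R] L), ∀ x, Q' (1 ⊗ₜ x) = algebraMap R S (Q x) := by
  obtain ⟨A, rfl⟩ := LinearMap.BilinMap.toQuadraticMap_surjective Q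
  exact ⟨(LinearMap.BilinForm.baseChange S A).toQuadraticMap, fun x => by
    simp [Algebra.algebraMap_eq_smul_one]⟩

theorem exists_mem_algebraMap_quadraticForm_eq_zero [Module.Free R L] [Module.Finite R L]
    {F : Type*} [Field F] [Finite F] [Algebra R F] (hF : Function.Surjective (algebraMap R F))
    {Q : QuadraticForm R L}
    (hQ : ∀ x, (∀ y, algebraMap R F (polar Q x y) = 0) → (1 : F) ⊗ₜ[R] x = 0)
    (N : Submodule R L) (hN : finrank R L + 2 < 2 * finrank F (N.baseChange F)) :
    ∃ u ∈ N, ∃ w ∈ N, algebraMap R F (Q u) = 0 ∧ algebraMap R F (polar Q u w) ≠ 0 := by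
  have := (algebraMap R F).domain_nontrivial
  obtain ⟨Q', hQ'⟩ := exists_quadraticForm_one_tmul F Q
  have hpolar (x y : L) : polar Q' (1 ⊗ₜ x) (1 ⊗ₜ y) = algebraMap R F (polar Q x y) := by
    simp [polar, ← tmul_add, hQ']
  have hleft : Q'.polarBilin.SeparatingLeft := fun v hv => by
    obtain ⟨x, rfl⟩ := TensorProduct.mk_surjective R L F hF v
    exact hQ x fun y => (hpolar x y).symm.trans (hv (1 ⊗ₜ y))
  have hnondeg : Q'.polarBilin.Nondegenerate :=
    (LinearMap.IsRefl.nondegenerate_iff_separatingLeft fun v w h =>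
      (polar_comm Q' w v).trans h).2 hleft
  have hlift : ∀ v ∈ N.baseChange F, ∃ x ∈ N, 1 ⊗ₜ x = v := by
    rintro _ ⟨v, rfl⟩
    obtain ⟨x, rfl⟩ := TensorProduct.mk_surjective R N F hF v
    exact ⟨x, x.2, rfl⟩
  obtain ⟨u', hu', w', hw', hQu, huw⟩ :=
    exists_mem_isotropic_polar_ne_zero hnondeg (N.baseChange F) (by rwa [finrank_baseChange])
  obtain ⟨u, hu, rfl⟩ := hlift u' hu'
  obtain ⟨w, hw, rfl⟩ := hlift w' hw'
  exact ⟨u, hu, w, hw, by rwa [← hQ'], by rwa [← hpolar]⟩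

end BaseChange

/-! ### Lifting modulo a nilpotent -/

theorem surjective_add_mul_add_sq_mul {R : Type*} [CommRing R] [Finite R] (r : R) {m s : R}
    (hm : IsUnit m) (hs : IsNilpotent s) : Function.Surjective fun t => r + t * m + t ^ 2 * s := by
  refine Finite.surjective_of_injective fun t t' htt' => sub_eq_zero.1 ?_
  have hunit : IsUnit (m + (t + t') * s) :=
    ((Commute.all _ _).isNilpotent_mul_left hs).isUnit_add_left_of_commute hm (.all _ _)
  refine hunit.mul_left_eq_zero.1 ?_
  linear_combination htt'

theorem exists_mem_algebraMap_quadraticForm_eq {R S L : Type*} [CommRing R] [CommRing S] [Finite S]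
    [Algebra R S] (hS : Function.Surjective (algebraMap R S)) [AddCommGroup L] [Module R L]
    (Q : QuadraticForm R L) {N : Submodule R L} {u w : L} (hu : u ∈ N) (hw : w ∈ N)
    (hQu : IsNilpotent (algebraMap R S (Q u))) (huw : IsUnit (algebraMap R S (polar Q u w)))
    (a : S) :
    ∃ x ∈ N, ∃ y ∈ N, algebraMap R S (Q x) = a ∧ algebraMap R S (polar Q x y) = 1 := by
  obtain ⟨t', ht⟩ := surjective_add_mul_add_sq_mul (algebraMap R S (Q w)) huw hQu a
  obtain ⟨t, rfl⟩ := hS t'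
  have hunit : IsUnit (algebraMap R S (polar Q (w + t • u) u)) := by
    have hnil := (Commute.all (algebraMap R S (2 * t)) _).isNilpotent_mul_left hQu
    convert hnil.isUnit_add_left_of_commute huw (.all _ _)
    simp only [polar_add_left, polar_comm Q w u, polar_smul_left, polar_self, nsmul_eq_mul,
      Nat.cast_ofNat, smul_eq_mul, map_add, map_mul, add_right_inj]
    ring
  obtain ⟨c', hc⟩ := hunit.exists_left_inv
  obtain ⟨c, rfl⟩ := hS c'
  refine ⟨w + t • u, N.add_mem hw (N.smul_mem t hu), c • u, N.smul_mem c hu, ?_, ?_⟩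
  · rw [← ht, QuadraticMap.map_add Q, QuadraticMap.map_smul, polar_smul_right, polar_comm Q w u]
    simp only [smul_eq_mul, map_add, map_mul]
    ring
  · rw [polar_smul_right, smul_eq_mul, map_mul, hc]

theorem isNilpotent_intCast_zmod_pow {p : ℕ} (k : ℕ) {z : ℤ} (hz : (p : ℤ) ∣ z) :
    IsNilpotent (z : ZMod (p ^ k)) :=
  ⟨k, by
    rw [← Int.cast_pow, ZMod.intCast_zmod_eq_zero_iff_dvd, Nat.cast_pow]
    exact pow_dvd_pow_of_dvd hz k⟩

theorem isUnit_intCast_zmod_prime_pow {p : ℕ} (hp : p.Prime) (k : ℕ) {z : ℤ}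
    (hz : ¬ (p : ℤ) ∣ z) : IsUnit (z : ZMod (p ^ k)) := by
  rw [ZMod.coe_int_isUnit_iff_isCoprime, Nat.cast_pow]
  exact ((Nat.prime_iff_prime_int.1 hp).coprime_iff_not_dvd.2 hz).pow_left

/-! ### Lattices modulo prime powers -/

section Lattice

variable {L : Type*} [AddCommGroup L]

variable (L) in
/-- The submodule `m L` of `L`, written so that `mE m` is definitionally `multiples (En 10) m`. -/
def multiples (m : ℕ) : Submodule ℤ L :=
  LinearMap.range ((m : ℤ) • (LinearMap.id : L →ₗ[ℤ] L))

/-- An integral quadratic form is nondegenerate modulo `m` if the polar form it induces on `L / mL`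
has trivial radical. -/
def NondegenerateMod (Q : QuadraticForm ℤ L) (m : ℕ) : Prop :=
  ∀ x, (∀ y, (m : ℤ) ∣ polar Q x y) → x ∈ multiples L m

theorem mem_multiples {m : ℕ} {x : L} : x ∈ multiples L m ↔ ∃ z, (m : ℤ) • z = x := Iff.rfl

theorem one_tmul_zmod_eq_zero_iff {m : ℕ} {x : L} :
    (1 : ZMod m) ⊗ₜ[ℤ] x = 0 ↔ x ∈ multiples L m := by
  let e : (ℤ ⧸ Ideal.span {(m : ℤ)}) ≃ₗ[ℤ] ZMod m :=
    (Int.quotientSpanNatEquivZMod m).toAddEquiv.toIntLinearEquiv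
  have he : e.rTensor L (1 ⊗ₜ x) = 1 ⊗ₜ x := by simp [e]
  have hker : (1 : ℤ ⧸ Ideal.span {(m : ℤ)}) ⊗ₜ[ℤ] x = 0 ↔
      x ∈ Ideal.span {(m : ℤ)} • (⊤ : Submodule ℤ L) := by
    rw [← LinearMap.ker_tensorProductMk]
    rfl
  rw [← he, LinearEquiv.map_eq_zero_iff, hker, Submodule.ideal_span_singleton_smul,
    Submodule.mem_smul_pointwise_iff_exists, mem_multiples]
  simp only [Submodule.mem_top, true_and]

theorem linearIndependent_one_tmul_zmod {ι : Type*} [Fintype ι] {m : ℕ} {v : ι → L}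
    (hv : ∀ c : ι → ℤ, ∑ i, c i • v i ∈ multiples L m → ∀ i, (m : ℤ) ∣ c i) :
    LinearIndependent (ZMod m) fun i => (1 : ZMod m) ⊗ₜ[ℤ] v i := by
  refine Fintype.linearIndependent_iff.2 fun g hg i => ?_
  choose c hc using fun i => ZMod.intCast_surjective (g i)
  have hsum : (1 : ZMod m) ⊗ₜ[ℤ] ∑ i, c i • v i = 0 := by
    simp only [tmul_sum, ← hg, ← hc, tmul_smul, ← Int.cast_smul_eq_zsmul (ZMod m)]
  rw [← hc i, ZMod.intCast_zmod_eq_zero_iff_dvd]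
  exact hv c (one_tmul_zmod_eq_zero_iff.1 hsum) i

theorem mkQ_sum_smul_eq_map_intCast {ι : Type*} [Fintype ι] [DecidableEq ι] {m n : ℕ}
    (f : (ι → ZMod m) →ₗ[ℤ] L ⧸ multiples L n) {v : ι → L}
    (hv : ∀ i, (multiples L n).mkQ (v i) = f (Pi.single i 1)) (c : ι → ℤ) :
    (multiples L n).mkQ (∑ i, c i • v i) = f fun i => (c i : ZMod m) := by
  have hc : (fun i => (c i : ZMod m)) = ∑ i, c i • Pi.single i (1 : ZMod m) := by
    ext j
    simp [Finset.sum_apply, Pi.single_apply]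
  simp only [hc, map_sum, map_zsmul, hv]

theorem dvd_of_sum_smul_mem_multiples {ι : Type*} [Fintype ι] [DecidableEq ι] {p k : ℕ}
    (hp : p ≠ 0) (hk : 1 ≤ k) {f : (ι → ZMod (p ^ k)) →ₗ[ℤ] L ⧸ multiples L (p ^ k)}
    (hf : Function.Injective f) {v : ι → L}
    (hv : ∀ i, (multiples L (p ^ k)).mkQ (v i) = f (Pi.single i 1)) {c : ι → ℤ}
    (hc : ∑ i, c i • v i ∈ multiples L p) (i : ι) : (p : ℤ) ∣ c i := by
  obtain ⟨k, rfl⟩ := Nat.exists_eq_add_of_le' hk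
  obtain ⟨z, hz⟩ := mem_multiples.1 hc
  have hsum : ∑ i, ((p : ℤ) ^ k * c i) • v i = ((p ^ (k + 1) : ℕ) : ℤ) • z := by
    rw [Nat.cast_pow, pow_succ, ← smul_smul, hz, Finset.smul_sum]
    simp only [smul_smul]
  have hfc : f (fun i => (((p : ℤ) ^ k * c i : ℤ) : ZMod (p ^ (k + 1)))) = f 0 := by
    rw [← mkQ_sum_smul_eq_map_intCast f hv, Submodule.mkQ_apply, map_zero,
      Submodule.Quotient.mk_eq_zero]
    exact mem_multiples.2 ⟨z, hsum.symm⟩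
  have hdvd : (p : ℤ) ^ k * p ∣ (p : ℤ) ^ k * c i := by
    simpa [pow_succ] using (ZMod.intCast_zmod_eq_zero_iff_dvd _ _).1 (congrFun (hf hfc) i)
  exact (mul_dvd_mul_iff_left (pow_ne_zero k (Nat.cast_ne_zero.2 hp))).1 hdvd

theorem card_le_finrank_baseChange_comap_range {ι : Type*} [Fintype ι] [Module.Finite ℤ L] {p k : ℕ}
    [Fact p.Prime] (hk : 1 ≤ k) {f : (ι → ZMod (p ^ k)) →ₗ[ℤ] L ⧸ multiples L (p ^ k)}
    (hf : Function.Injective f) :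
    Fintype.card ι ≤ finrank (ZMod p)
      (((LinearMap.range f).comap (multiples L (p ^ k)).mkQ).baseChange (ZMod p)) := by
  classical
  choose v hv using fun i => (multiples L (p ^ k)).mkQ_surjective (f (Pi.single i 1))
  have hind := linearIndependent_one_tmul_zmod fun c =>
    dvd_of_sum_smul_mem_multiples (c := c) (Fact.out : p.Prime).ne_zero hk hf hv
  rw [← finrank_span_eq_card hind]
  refine Submodule.finrank_mono (Submodule.span_le.2 (Set.range_subset_iff.2 fun i => ?_))
  exact Submodule.tmul_mem_baseChange_of_mem 1 ⟨_, (hv i).symm⟩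

theorem represents_all_units_with_companion_general [Module.Free ℤ L] [Module.Finite ℤ L]
    {ι : Type*} [Fintype ι] {p k : ℕ} (hp : p.Prime) (hk : 1 ≤ k) {Q : QuadraticForm ℤ L}
    (hQ : NondegenerateMod Q p) (hι : finrank ℤ L + 2 < 2 * Fintype.card ι)
    {f : (ι → ZMod (p ^ k)) →ₗ[ℤ] L ⧸ multiples L (p ^ k)} (hf : Function.Injective f)
    (a : ZMod (p ^ k)) :
    ∃ x y : L, Submodule.Quotient.mk x ∈ LinearMap.range f ∧
      Submodule.Quotient.mk y ∈ LinearMap.range f ∧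
      ((Q x : ℤ) : ZMod (p ^ k)) = a ∧ ((polar Q x y : ℤ) : ZMod (p ^ k)) = 1 := by
  have := Fact.mk hp
  have : NeZero (p ^ k) := ⟨pow_ne_zero k hp.ne_zero⟩
  have hrank := card_le_finrank_baseChange_comap_range hk hf
  obtain ⟨u, hu, w, hw, hQu, huw⟩ := exists_mem_algebraMap_quadraticForm_eq_zero (F := ZMod p)
    ZMod.intCast_surjective (fun x hx => one_tmul_zmod_eq_zero_iff.2
      (hQ x fun y => (ZMod.intCast_zmod_eq_zero_iff_dvd _ p).1 (hx y))) _
    (hι.trans_le (Nat.mul_le_mul_left 2 hrank))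
  obtain ⟨x, hx, y, hy, hxa, hxy⟩ := exists_mem_algebraMap_quadraticForm_eq (S := ZMod (p ^ k))
    ZMod.intCast_surjective Q hu hw
    (isNilpotent_intCast_zmod_pow k ((ZMod.intCast_zmod_eq_zero_iff_dvd _ p).1 hQu))
    (isUnit_intCast_zmod_prime_pow hp k (mt (ZMod.intCast_zmod_eq_zero_iff_dvd _ p).2 huw)) a
  exact ⟨x, y, hx, hy, hxa, hxy⟩

end Lattice

/-! ### The lattice `E₁₀` -/

/-- `B` as a bilinear form, which makes the `map_add` and `map_smul` lemmas apply to it. -/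
def lorentzForm (n : ℕ) : LinearMap.BilinForm ℤ (Fin (n + 1) → ℤ) :=
  LinearMap.mk₂ ℤ B
    (fun x y z => by simp only [B, Pi.add_apply, add_mul, Finset.sum_add_distrib]; ring)
    (fun c x y => by
      simp only [B, Pi.smul_apply, smul_eq_mul, mul_assoc, ← Finset.mul_sum]; ring)
    (fun x y z => by simp only [B, Pi.add_apply, mul_add, Finset.sum_add_distrib]; ring)
    (fun c x y => by
      simp only [B, Pi.smul_apply, smul_eq_mul, mul_left_comm _ c, ← Finset.mul_sum]; ring)

theorem lorentzForm_apply {n : ℕ} (x y : Fin (n + 1) → ℤ) : lorentzForm n x y = B x y := rfl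

theorem B_comm {n : ℕ} (x y : Fin (n + 1) → ℤ) : B x y = B y x := by
  simp only [B, mul_comm]

theorem even_B_self {n : ℕ} (x : En n) : Even (B (x : Fin (n + 1) → ℤ) x) := by
  obtain ⟨x, hx : B x (kv n) = 0⟩ := x
  have hB : B x x = B x x - B x (kv n) := by rw [hx, sub_zero]
  have hsub : B x x - B x (kv n) =
      x 0 * (x 0 + 1) + 2 * x 0 - ∑ i : Fin n, x i.succ * (x i.succ - 1) := by
    simp only [B, kv, Fin.succ_ne_zero, if_true, if_false, mul_neg, mul_one, mul_sub,
      Finset.sum_sub_distrib]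
    ring
  rw [hB, hsub]
  exact ((Int.even_mul_succ_self _).add (even_two_mul _)).sub
    (Finset.even_sum _ fun i _ => Int.even_mul_pred_self _)

theorem two_mul_B_self_div_two {n : ℕ} (x : En n) :
    2 * (B (x : Fin (n + 1) → ℤ) x / 2) = B (x : Fin (n + 1) → ℤ) x :=
  Int.mul_ediv_cancel' (even_B_self x).two_dvd

theorem polar_B_self_div_two {n : ℕ} (x y : En n) :
    polar (fun z : En n => B (z : Fin (n + 1) → ℤ) z / 2) x y = B (x : Fin (n + 1) → ℤ) y := by
  have hadd : B (x + y : Fin (n + 1) → ℤ) (x + y) = B x.1 x + B y.1 y + 2 * B x.1 y := by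
    simp only [← lorentzForm_apply, map_add, LinearMap.add_apply]
    simp only [lorentzForm_apply, B_comm y.1 x]
    ring
  have := two_mul_B_self_div_two (x + y)
  have := two_mul_B_self_div_two x
  have := two_mul_B_self_div_two y
  simp only [polar, Submodule.coe_add] at *
  linarith

/-- The quadratic form `x ↦ ⟨x,x⟩ / 2` on `E_n`; the division is exact by `even_B_self`. -/
def halfNorm (n : ℕ) : QuadraticForm ℤ (En n) :=
  QuadraticMap.ofPolar (fun x => B (x : Fin (n + 1) → ℤ) x / 2)
    (fun c x => by
      have hsmul : B (c • x : Fin (n + 1) → ℤ) (c • x) = c * (c * B x.1 x) := by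
        simp only [← lorentzForm_apply, map_smul, LinearMap.smul_apply, smul_eq_mul]
      refine mul_left_cancel₀ (two_ne_zero' ℤ) ?_
      rw [two_mul_B_self_div_two, Submodule.coe_smul, hsmul, smul_eq_mul]
      linear_combination -(c * c) * two_mul_B_self_div_two x)
    (fun x x' y => by
      simp only [polar_B_self_div_two]
      simp only [← lorentzForm_apply, Submodule.coe_add, map_add, LinearMap.add_apply])
    (fun c x y => by
      simp only [polar_B_self_div_two]
      simp only [← lorentzForm_apply, Submodule.coe_smul, map_smul, LinearMap.smul_apply])

theorem two_mul_halfNorm {n : ℕ} (x : En n) : 2 * halfNorm n x = B (x : Fin (n + 1) → ℤ) x :=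
  two_mul_B_self_div_two x

theorem polar_halfNorm {n : ℕ} (x y : En n) :
    polar (halfNorm n) x y = B (x : Fin (n + 1) → ℤ) y :=
  polar_B_self_div_two x y

theorem dvd_apply_of_forall_dvd_B {n : ℕ} {m : ℤ} {x : Fin (n + 1) → ℤ} (hx : ∀ y, m ∣ B x y)
    (j : Fin (n + 1)) : m ∣ x j := by
  have := hx (Pi.single j 1)
  cases j using Fin.cases with
  | zero => simpa [B] using this
  | succ i => simpa [B, Pi.single_apply, (Fin.succ_ne_zero i).symm] using this

theorem add_B_smul_kv_mem_En_ten (x : Fin 11 → ℤ) : x + B x (kv 10) • kv 10 ∈ En 10 := by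
  have hkv : B (kv 10) (kv 10) = -1 := by decide
  change B _ _ = 0
  simp only [← lorentzForm_apply, map_add, map_smul, LinearMap.add_apply, LinearMap.smul_apply]
  simp [lorentzForm_apply, hkv]

theorem nondegenerateMod_halfNorm_ten (m : ℕ) : NondegenerateMod (halfNorm 10) m := by
  rintro ⟨x, hxk : B x (kv 10) = 0⟩ hx
  have hdvd (y : Fin 11 → ℤ) : (m : ℤ) ∣ B x y := by
    have := hx ⟨_, add_B_smul_kv_mem_En_ten y⟩
    rwa [polar_halfNorm, ← lorentzForm_apply, map_add, map_smul, lorentzForm_apply x (kv 10), hxk,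
      smul_zero, add_zero, lorentzForm_apply] at this
  choose z hz using dvd_apply_of_forall_dvd_B hdvd
  have hxz : x = (m : ℤ) • z := funext hz
  have hzk : (m : ℤ) * B z (kv 10) = 0 := by
    rw [← hxk, hxz, ← lorentzForm_apply, ← lorentzForm_apply, map_smul, LinearMap.smul_apply,
      smul_eq_mul]
  refine ⟨⟨_, add_B_smul_kv_mem_En_ten z⟩, Subtype.ext ?_⟩
  change (m : ℤ) • (z + B z (kv 10) • kv 10) = x
  rw [smul_add, smul_smul, hzk, zero_smul, add_zero, hxz]

/-- if `M ⊆ E₁₀/p^kE₁₀` contains a submodule isomorphic to `(ℤ/p^kℤ)^8`,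
then for every unit `a` of `ℤ/p^kℤ` there are `x, y ∈ E₁₀` with images in `M`,
`(1/2)⟨x,x⟩ ≡ a` and `⟨x,y⟩ ≡ 1 (mod p^k)`. -/
theorem represents_all_units_with_companion (p : ℕ) (hp : p.Prime) (k : ℕ) (hk : 1 ≤ k)
    (M : Submodule ℤ ((En 10) ⧸ mE (p ^ k)))
    (f : (Fin 8 → ZMod (p ^ k)) →ₗ[ℤ] (En 10) ⧸ mE (p ^ k))
    (hf : Function.Injective f)
    (hfM : LinearMap.range f ≤ M)
    (a : (ZMod (p ^ k))ˣ) :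
    ∃ x y : En 10,
      (Submodule.Quotient.mk x : (En 10) ⧸ mE (p ^ k)) ∈ M ∧
      (Submodule.Quotient.mk y : (En 10) ⧸ mE (p ^ k)) ∈ M ∧
      (∃ t : ℤ, B (x : Fin 11 → ℤ) (x : Fin 11 → ℤ) = 2 * t ∧
        (t : ZMod (p ^ k)) = (a : ZMod (p ^ k))) ∧
      ((B (x : Fin 11 → ℤ) (y : Fin 11 → ℤ) : ℤ) : ZMod (p ^ k)) = 1 := by
  have hrank : finrank ℤ (En 10) + 2 < 2 * Fintype.card (Fin 8) := by
    have := (En 10).finrank_le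
    rw [finrank_fin_fun] at this
    rw [Fintype.card_fin]
    lia
  obtain ⟨x, y, hx, hy, hQx, hxy⟩ := represents_all_units_with_companion_general hp hk
    (nondegenerateMod_halfNorm_ten p) hrank hf a.1
  exact ⟨x, y, hfM hx, hfM hy, ⟨_, (two_mul_halfNorm x).symm, hQx⟩, by rwa [← polar_halfNorm]⟩
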